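/- Gauss–Lucas theorem: for any nonconstant complex polynomial f, every root of the derivative f' lies in the convex hull of the set of roots of f. -/

import Mathlib

theorem stmt_6 (f : Polynomial ℂ) (hf : 0 < f.natDegree) :
    ∀ z : ℂ, f.derivative.IsRoot z →
      z ∈ convexHull ℝ {w : ℂ | f.IsRoot w} := by
  intro z hz
  have h₀ : 0 < f.degree := Polynomial.natDegree_pos_iff_degree_pos.mp hf
  rw [Polynomial.eq_centerMass_of_eval_derivative_eq_zero h₀ hz]
  apply Finset.centerMass_mem_convexHull
  · exact fun w _ => Polynomial.derivRootWeight_nonneg f z w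
  · exact Polynomial.sum_derivRootWeight_pos h₀ z
  · intro w hw
    exact Polynomial.isRoot_of_mem_roots (Multiset.mem_toFinset.mp hw)
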